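/- Let R be a commutative semiring that is strict and has no zero divisors, and suppose there is no unit a of R with a + a⁻¹ = 1. Then the identity (T + 1)(T^4 + T^2 + 1) = (T^3 + 1)(T^2 + T + 1) holds in R[T] and all four polynomials T + 1, T^4 + T^2 + 1, T^3 + 1, T^2 + T + 1 are irreducible in R[T]; in particular T^5 + T^4 + T^3 + T^2 + T + 1 has two factorizations into irreducibles whose multisets of degrees {1,4} and {3,2} are different. -/

import Mathlib

open Polynomial

/-!
Over a strict semiring without zero divisors no cancellation occurs in a product `p * q`: if its
`k`-th coefficient vanishes, so does every term `pᵢ qⱼ` with `i + j = k`. Hence, when `f` has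
nonzero constant term, every factor of `f(Tⁿ)` is itself a polynomial in `Tⁿ`, and `f(Tⁿ)` is
irreducible as soon as `f` is. This handles `T³ + 1` and `T⁴ + T² + 1`, obtained from `T + 1` and
`T² + T + 1`. The latter is reducible exactly when it is `(T + a)(T + b)` with `ab = 1` and
`a + b = 1`.
-/

theorem coeff_mul_coeff_eq_zero_of_coeff_mul_eq_zero {R : Type*} [Semiring R]
    [Subsingleton (AddUnits R)] {p q : R[X]} {i j : ℕ}
    (h : (p * q).coeff (i + j) = 0) : p.coeff i * q.coeff j = 0 := by
  rw [coeff_mul, Finset.sum_eq_zero_iff] at h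
  exact h (i, j) (Finset.HasAntidiagonal.mem_antidiagonal.mpr rfl)

section Expand

variable {R : Type*} [CommSemiring R] {n : ℕ}

theorem isUnit_of_isUnit_expand (hn : n ≠ 0) {f : R[X]} (hf : IsUnit (expand R n f)) :
    IsUnit f := by
  obtain ⟨g, hg⟩ := hf.exists_left_inv
  refine IsUnit.of_mul_eq_one_right (contract n g) ?_
  rw [← contract_mul_expand hn, hg, ← C_1, contract_C]

theorem expand_contract_of_coeff_eq_zero (hn : n ≠ 0) {p : R[X]}
    (hp : ∀ i, ¬n ∣ i → p.coeff i = 0) : expand R n (contract n p) = p := by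
  ext i
  rw [coeff_expand hn.bot_lt]
  split_ifs with hi
  · rw [coeff_contract hn, Nat.div_mul_cancel hi]
  · exact (hp i hi).symm

variable [Subsingleton (AddUnits R)] [NoZeroDivisors R]

theorem expand_contract_of_mul_eq_expand (hn : n ≠ 0) {f p q : R[X]} (hq : q.coeff 0 ≠ 0)
    (h : p * q = expand R n f) : expand R n (contract n p) = p := by
  refine expand_contract_of_coeff_eq_zero hn fun i hi ↦ ?_
  have hcoeff : (p * q).coeff (i + 0) = 0 := by rw [h, add_zero, coeff_expand hn.bot_lt, if_neg hi]
  exact (mul_eq_zero.mp (coeff_mul_coeff_eq_zero_of_coeff_mul_eq_zero hcoeff)).resolve_right hq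

theorem irreducible_expand (hn : n ≠ 0) {f : R[X]} (hf : Irreducible f) (hf₀ : f.coeff 0 ≠ 0) :
    Irreducible (expand R n f) := by
  refine ⟨fun hu ↦ hf.not_isUnit (isUnit_of_isUnit_expand hn hu), fun p q h ↦ ?_⟩
  have hpq₀ : p.coeff 0 * q.coeff 0 ≠ 0 := by
    rwa [← mul_coeff_zero, ← h, coeff_expand hn.bot_lt, if_pos (dvd_zero n), Nat.zero_div]
  have hp : expand R n (contract n p) = p :=
    expand_contract_of_mul_eq_expand hn (right_ne_zero_of_mul hpq₀) h.symm
  have hq : expand R n (contract n q) = q :=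
    expand_contract_of_mul_eq_expand hn (left_ne_zero_of_mul hpq₀) (by rw [mul_comm, h])
  have hfactor : f = contract n p * contract n q :=
    expand_injective hn.bot_lt (by rw [map_mul, hp, hq, h])
  rw [← hp, ← hq]
  exact (hf.isUnit_or_isUnit hfactor).imp (·.map (expand R n)) (·.map (expand R n))

end Expand

section LowDegree

variable {R : Type*} [CommSemiring R]

theorem exists_units_add_inv_eq_one_iff :
    (∃ a : Rˣ, (a : R) + ((a⁻¹ : Rˣ) : R) = 1) ↔ ∃ a b : R, a * b = 1 ∧ a + b = 1 := by
  constructor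
  · rintro ⟨a, ha⟩
    exact ⟨a, (a⁻¹ : Rˣ), a.mul_inv, ha⟩
  · rintro ⟨a, b, hmul, hadd⟩
    exact ⟨⟨a, b, hmul, by rw [mul_comm, hmul]⟩, hadd⟩

variable [NoZeroDivisors R]

theorem irreducible_of_monic_of_natDegree_eq_one {p : R[X]} (hp : p.Monic)
    (hdeg : p.natDegree = 1) : Irreducible p := by
  have hne : p ≠ 1 := by
    rintro rfl
    exact zero_ne_one (natDegree_one.symm.trans hdeg)
  refine hp.irreducible_iff_natDegree'.mpr ⟨hne, fun _ _ _ _ _ ↦ ?_⟩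
  simp [hdeg]

variable [Nontrivial R]

theorem irreducible_X_add_one : Irreducible (X + 1 : R[X]) :=
  irreducible_of_monic_of_natDegree_eq_one (monic_X_add_C 1) (natDegree_X_add_C 1)

theorem irreducible_X_sq_add_X_add_one_iff :
    Irreducible (X ^ 2 + X + 1 : R[X]) ↔ ¬∃ a : Rˣ, (a : R) + ((a⁻¹ : Rˣ) : R) = 1 := by
  have hmonic : (X ^ 2 + X + 1 : R[X]).Monic := by monicity!
  have hdeg : (X ^ 2 + X + 1 : R[X]).natDegree = 2 := by compute_degree!
  have hcoeff₀ : (X ^ 2 + X + 1 : R[X]).coeff 0 = 1 := by simp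
  have hcoeff₁ : (X ^ 2 + X + 1 : R[X]).coeff 1 = 1 := by simp [coeff_X_pow, coeff_one]
  rw [← not_iff_not, not_not, hmonic.not_irreducible_iff_exists_add_mul_eq_coeff hdeg, hcoeff₀,
    hcoeff₁, exists_units_add_inv_eq_one_iff]
  simp only [eq_comm (a := (1 : R))]

variable [Subsingleton (AddUnits R)]

theorem irreducible_X_pow_add_one {n : ℕ} (hn : n ≠ 0) : Irreducible (X ^ n + 1 : R[X]) := by
  simpa using irreducible_expand hn (irreducible_X_add_one (R := R)) (by simp)

theorem irreducible_X_pow_four_add_X_sq_add_one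
    (hno : ¬∃ a : Rˣ, (a : R) + ((a⁻¹ : Rˣ) : R) = 1) :
    Irreducible (X ^ 4 + X ^ 2 + 1 : R[X]) := by
  have hexpand : expand R 2 (X ^ 2 + X + 1) = X ^ 4 + X ^ 2 + 1 := by
    simp only [map_add, map_pow, map_one, expand_X, ← pow_mul]
  rw [← hexpand]
  exact irreducible_expand two_ne_zero (irreducible_X_sq_add_X_add_one_iff.mpr hno) (by simp)

end LowDegree

/-- Over a strict commutative semiring without zero divisors in which no unit
`a` satisfies `a + a⁻¹ = 1`, the identity
`(T + 1)(T⁴ + T² + 1) = (T³ + 1)(T² + T + 1)` holds, all four factors are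
irreducible, and hence `T⁵ + T⁴ + T³ + T² + T + 1` has two factorizations into
irreducibles with different multisets of degrees `{1, 4}` and `{3, 2}`. -/
theorem two_factorizations_of_no_unit_sum_one
    (R : Type*) [CommSemiring R]
    (hstrict : ∀ a b : R, a + b = 0 → a = 0 ∧ b = 0)
    (hnzd : ∀ a b : R, a * b = 0 → a = 0 ∨ b = 0)
    (hno : ¬ ∃ a : Rˣ, (a : R) + ((a⁻¹ : Rˣ) : R) = 1) :
    ((X : R[X]) + 1) * (X ^ 4 + X ^ 2 + 1) = (X ^ 3 + 1) * (X ^ 2 + X + 1) ∧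
    Irreducible ((X : R[X]) + 1) ∧
    Irreducible ((X : R[X]) ^ 4 + X ^ 2 + 1) ∧
    Irreducible ((X : R[X]) ^ 3 + 1) ∧
    Irreducible ((X : R[X]) ^ 2 + X + 1) ∧
    ∃ l₁ l₂ : List R[X],
      (∀ p ∈ l₁, Irreducible p) ∧ (∀ p ∈ l₂, Irreducible p) ∧
      l₁.prod = (X : R[X]) ^ 5 + X ^ 4 + X ^ 3 + X ^ 2 + X + 1 ∧
      l₂.prod = (X : R[X]) ^ 5 + X ^ 4 + X ^ 3 + X ^ 2 + X + 1 ∧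
      (↑(l₁.map Polynomial.natDegree) : Multiset ℕ) = {1, 4} ∧
      (↑(l₂.map Polynomial.natDegree) : Multiset ℕ) = {3, 2} ∧
      ({1, 4} : Multiset ℕ) ≠ {3, 2} := by
  have : Subsingleton (AddUnits R) :=
    ⟨fun u v ↦ AddUnits.ext <|
      (hstrict _ _ u.add_neg).1.trans (hstrict _ _ v.add_neg).1.symm⟩
  have : NoZeroDivisors R := ⟨fun {a b} ↦ hnzd a b⟩
  have : Nontrivial R :=
    not_subsingleton_iff_nontrivial.mp fun _ ↦ hno ⟨1, Subsingleton.elim _ _⟩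
  have irr₁ : Irreducible (X + 1 : R[X]) := irreducible_X_add_one
  have irr₄ : Irreducible (X ^ 4 + X ^ 2 + 1 : R[X]) :=
    irreducible_X_pow_four_add_X_sq_add_one hno
  have irr₃ : Irreducible (X ^ 3 + 1 : R[X]) := irreducible_X_pow_add_one three_ne_zero
  have irr₂ : Irreducible (X ^ 2 + X + 1 : R[X]) := irreducible_X_sq_add_X_add_one_iff.mpr hno
  have deg₁ : (X + 1 : R[X]).natDegree = 1 := by compute_degree!
  have deg₄ : (X ^ 4 + X ^ 2 + 1 : R[X]).natDegree = 4 := by compute_degree!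
  have deg₃ : (X ^ 3 + 1 : R[X]).natDegree = 3 := by compute_degree!
  have deg₂ : (X ^ 2 + X + 1 : R[X]).natDegree = 2 := by compute_degree!
  refine ⟨by ring, irr₁, irr₄, irr₃, irr₂, [X + 1, X ^ 4 + X ^ 2 + 1], [X ^ 3 + 1, X ^ 2 + X + 1],
    by simp [irr₁, irr₄], by simp [irr₃, irr₂], ?_, ?_, ?_, ?_, by decide⟩
  · rw [List.prod_pair]; ring
  · rw [List.prod_pair]; ring
  · rw [List.map_cons, List.map_singleton, deg₁, deg₄]; rfl
  · rw [List.map_cons, List.map_singleton, deg₃, deg₂]; rfl
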